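/- arXiv:quant-ph/0209058 — 5 statements merged into one kernel-verified Lean document; each statement's English description precedes it below -/
import Mathlib

section
/- If S is an abelian subgroup of the n-qubit Pauli group Gⁿ with −I ∉ S, then the stabilized subspace C_S = {v ∈ ℂ^(2ⁿ) : g·v = v for all g ∈ S} has complex dimension 2ⁿ / |S|. In particular, if S is generated by r independent commuting generators (so |S| = 2^r), then dim C_S = 2^(n−r). -/
/-!
The average `p = |S|⁻¹ ∑_{g ∈ S} g` is a projection onto the stabilized subspace, because left
translation by an element of `S` permutes `S`. Hence the dimension equals
`tr p = |S|⁻¹ ∑_{g ∈ S} tr g`. A tensor product of Pauli matrices is traceless unless every factor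
is `I` (`pauliWord_eq_one_or_trace_eq_zero`), and `-I ∉ S` excludes the scalars `-I` and `±i I`
(the latter square to `-I`), so only the identity contributes, with trace `2ⁿ`
(`trace_eq_zero_of_mem`). This gives `dim C_S · |S| = 2ⁿ` (`stabSpace_finrank_mul_ncard`), from
which both claims follow by arithmetic.
-/

open Matrix Kronecker
open scoped Classical

noncomputable section

/-- The four single-qubit Pauli matrices `I, X, Y, Z` (indexed `0,1,2,3`). -/
def PauliMat : Fin 4 → Matrix (Fin 2) (Fin 2) ℂ
  | 0 => 1
  | 1 => !![0, 1; 1, 0]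
  | 2 => !![0, -Complex.I; Complex.I, 0]
  | 3 => !![1, 0; 0, -1]

/-- The allowed phases `{1, -1, i, -i}`. -/
def PauliPhase : Set ℂ := {1, -1, Complex.I, -Complex.I}

/-- The `n`-fold Kronecker product `P₁ ⊗ ⋯ ⊗ Pₙ` of single-qubit Pauli matrices
(qubit 1 leftmost). -/
def pauliWord : (n : ℕ) → (Fin n → Fin 4) → Matrix (Fin (2 ^ n)) (Fin (2 ^ n)) ℂ
  | 0, _ => 1
  | n + 1, P =>
      Matrix.reindex (finProdFinEquiv.trans (finCongr (by ring)))
        (finProdFinEquiv.trans (finCongr (by ring)))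
        (Matrix.kroneckerMap (· * ·) (PauliMat (P 0)) (pauliWord n (fun j => P j.succ)))

/-- The `n`-qubit Pauli group `Gⁿ`, as a set of `2ⁿ × 2ⁿ` complex matrices. -/
def PauliGroup (n : ℕ) : Set (Matrix (Fin (2 ^ n)) (Fin (2 ^ n)) ℂ) :=
  {A | ∃ c ∈ PauliPhase, ∃ P : Fin n → Fin 4, A = c • pauliWord n P}

/-- The syndrome of `g` with respect to generators `gs`: the `i`-th component is `0`
if `g` commutes with `gs i` and `1` otherwise (for Pauli elements, "otherwise" means
anticommutes). -/
def syndrome {n r : ℕ} (gs : Fin r → Matrix (Fin (2 ^ n)) (Fin (2 ^ n)) ℂ)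
    (g : Matrix (Fin (2 ^ n)) (Fin (2 ^ n)) ℂ) : Fin r → ZMod 2 :=
  fun i => if g * gs i = gs i * g then 0 else 1


/-- The subspace of states fixed by every element of S. -/
def stabSpace {n : ℕ} (S : Set (Matrix (Fin (2 ^ n)) (Fin (2 ^ n)) ℂ)) :
    Submodule ℂ (Fin (2 ^ n) → ℂ) where
  carrier := {v | ∀ g ∈ S, g.mulVec v = v}
  add_mem' := by
    intro a b ha hb g hg
    rw [Matrix.mulVec_add, ha g hg, hb g hg]
  zero_mem' := by
    intro g hg
    rw [Matrix.mulVec_zero]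
  smul_mem' := by
    intro c v hv g hg
    rw [Matrix.mulVec_smul, hv g hg]

/-- Only the identity word has nonzero trace. -/
theorem pauliWord_eq_one_or_trace_eq_zero (n : ℕ) (P : Fin n → Fin 4) :
    pauliWord n P = 1 ∨ (pauliWord n P).trace = 0 := by
  induction n with
  | zero => exact Or.inl rfl
  | succ n ih =>
    have htrace : (pauliWord (n + 1) P).trace =
        (PauliMat (P 0)).trace * (pauliWord n (fun j => P j.succ)).trace := by
      rw [pauliWord, ← Matrix.trace_kronecker, Matrix.reindex_apply]
      simp only [Matrix.trace, Matrix.diag_apply, Matrix.submatrix_apply]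
      exact Equiv.sum_comp (finProdFinEquiv.trans (finCongr (by ring))).symm
        (fun i => (PauliMat (P 0) ⊗ₖ pauliWord n (fun j => P j.succ)) i i)
    have hmat : P 0 = 0 ∨ (PauliMat (P 0)).trace = 0 := by
      generalize P 0 = k
      fin_cases k <;> simp [PauliMat, Matrix.trace_fin_two]
    rcases hmat with h0 | h0
    · rcases ih (fun j => P j.succ) with h | h
      · left
        have hk : (PauliMat (P 0) ⊗ₖ pauliWord n (fun j => P j.succ)) = 1 := by
          rw [h0, h, PauliMat, Matrix.one_kronecker_one]
        rw [pauliWord]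
        refine (congrArg _ hk).trans ?_
        exact Matrix.submatrix_one_equiv (Equiv.symm _)
      · right
        rw [htrace, h, mul_zero]
    · right
      rw [htrace, h0, zero_mul]

theorem pauliGroup_finite (n : ℕ) : (PauliGroup n).Finite := by
  have hphase : PauliPhase.Finite := by
    unfold PauliPhase
    exact Set.toFinite _
  refine ((hphase.prod (Set.finite_univ (α := Fin n → Fin 4))).image
    (fun x => x.1 • pauliWord n x.2)).subset ?_
  rintro A ⟨c, hc, P, rfl⟩
  exact ⟨(c, P), ⟨hc, Set.mem_univ _⟩, rfl⟩

/-- A scalar Pauli matrix other than `1` is `-1` or squares to `-1`, so a multiplicatively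
closed set of Pauli matrices avoiding `-1` contains no traceful element besides `1`. -/
theorem trace_eq_zero_of_mem {n : ℕ} {S : Set (Matrix (Fin (2 ^ n)) (Fin (2 ^ n)) ℂ)}
    (hsub : S ⊆ PauliGroup n) (hmul : ∀ a ∈ S, ∀ b ∈ S, a * b ∈ S)
    (hneg : (-1 : Matrix (Fin (2 ^ n)) (Fin (2 ^ n)) ℂ) ∉ S)
    {g : Matrix (Fin (2 ^ n)) (Fin (2 ^ n)) ℂ} (hg : g ∈ S) (hg1 : g ≠ 1) : g.trace = 0 := by
  obtain ⟨c, hc, P, rfl⟩ := hsub hg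
  rcases pauliWord_eq_one_or_trace_eq_zero n P with h | h
  · exfalso
    rw [h] at hg hg1
    have hsq := hmul _ hg _ hg
    simp only [PauliPhase, Set.mem_insert_iff, Set.mem_singleton_iff] at hc
    rcases hc with rfl | rfl | rfl | rfl
    · exact hg1 (one_smul _ _)
    · exact hneg (by simpa using hg)
    · exact hneg (by simpa [smul_smul] using hsq)
    · exact hneg (by simpa [smul_smul] using hsq)
  · rw [Matrix.trace_smul, h, smul_zero]

/-- The division-free form of the dimension formula, obtained as the trace of the averaging
projection. -/
theorem stabSpace_finrank_mul_ncard {n : ℕ} {S : Set (Matrix (Fin (2 ^ n)) (Fin (2 ^ n)) ℂ)}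
    (hsub : S ⊆ PauliGroup n)
    (hone : (1 : Matrix (Fin (2 ^ n)) (Fin (2 ^ n)) ℂ) ∈ S)
    (hmul : ∀ a ∈ S, ∀ b ∈ S, a * b ∈ S)
    (hinv : ∀ a ∈ S, ∃ b ∈ S, a * b = 1 ∧ b * a = 1)
    (hneg : (-1 : Matrix (Fin (2 ^ n)) (Fin (2 ^ n)) ℂ) ∉ S) :
    Module.finrank ℂ (stabSpace S) * S.ncard = 2 ^ n := by
  have hfin : S.Finite := (pauliGroup_finite n).subset hsub
  obtain ⟨T, rfl⟩ := hfin.exists_finset_coe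
  simp only [Finset.mem_coe] at hone hmul hinv
  rw [Set.ncard_coe_finset]
  have hcard : (T.card : ℂ) ≠ 0 := by
    exact_mod_cast (Finset.card_pos.mpr ⟨1, hone⟩).ne'
  have htranslate : ∀ s ∈ T, s * ∑ g ∈ T, g = ∑ g ∈ T, g := by
    intro s hs
    obtain ⟨t, ht, hst, hts⟩ := hinv s hs
    rw [Finset.mul_sum]
    refine Finset.sum_bij' (fun g _ => s * g) (fun g _ => t * g)
      (fun g hg => hmul s hs g hg) (fun g hg => hmul t ht g hg) ?_ ?_ (fun _ _ => rfl)
    · intro g _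
      rw [← mul_assoc, hts, one_mul]
    · intro g _
      rw [← mul_assoc, hst, one_mul]
  have hproj : LinearMap.IsProj (stabSpace (T : Set (Matrix (Fin (2 ^ n)) (Fin (2 ^ n)) ℂ)))
      (Matrix.toLin' ((T.card : ℂ)⁻¹ • ∑ g ∈ T, g)) := by
    constructor
    · intro v s hs
      rw [Matrix.toLin'_apply, Matrix.mulVec_mulVec, Matrix.mul_smul, htranslate s hs]
    · intro v hv
      have hsum : (∑ g ∈ T, g) *ᵥ v = (T.card : ℂ) • v := by
        rw [Matrix.sum_mulVec, Finset.sum_congr rfl (fun g hg => hv g hg),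
          Finset.sum_const, Nat.cast_smul_eq_nsmul]
      rw [Matrix.toLin'_apply, Matrix.smul_mulVec, hsum, smul_smul, inv_mul_cancel₀ hcard,
        one_smul]
  have htrace : (∑ g ∈ T, g).trace = (2 : ℂ) ^ n := by
    rw [Matrix.trace_sum, Finset.sum_eq_single_of_mem 1 hone
      (fun g hg hg1 => trace_eq_zero_of_mem hsub hmul hneg hg hg1)]
    simp
  have hdim := hproj.trace
  rw [Matrix.trace_toLin'_eq, Matrix.trace_smul, htrace, smul_eq_mul] at hdim
  have hdim' : (Module.finrank ℂ (stabSpace (T : Set (Matrix (Fin (2 ^ n)) (Fin (2 ^ n)) ℂ))) : ℂ)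
      * T.card = 2 ^ n := by
    rw [← hdim]
    field_simp
  exact_mod_cast hdim'

/-- the stabilized subspace C_S has dimension 2ⁿ / |S|; in particular
if |S| = 2^r then dim C_S = 2^(n-r). -/
theorem stabSpace_finrank {n : ℕ}
    (S : Set (Matrix (Fin (2 ^ n)) (Fin (2 ^ n)) ℂ))
    (hsub : S ⊆ PauliGroup n)
    (hone : (1 : Matrix (Fin (2 ^ n)) (Fin (2 ^ n)) ℂ) ∈ S)
    (hmul : ∀ a ∈ S, ∀ b ∈ S, a * b ∈ S)
    (hinv : ∀ a ∈ S, ∃ b ∈ S, a * b = 1 ∧ b * a = 1)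
    (habel : ∀ a ∈ S, ∀ b ∈ S, a * b = b * a)
    (hneg : (-1 : Matrix (Fin (2 ^ n)) (Fin (2 ^ n)) ℂ) ∉ S) :
    Module.finrank ℂ (stabSpace S) = 2 ^ n / S.ncard ∧
      ∀ r : ℕ, S.ncard = 2 ^ r → Module.finrank ℂ (stabSpace S) = 2 ^ (n - r) := by
  have key := stabSpace_finrank_mul_ncard hsub hone hmul hinv hneg
  have hpos : 0 < S.ncard := by
    rcases Nat.eq_zero_or_pos S.ncard with h | h
    · rw [h, mul_zero] at key
      exact absurd key.symm (by positivity)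
    · exact h
  have hdiv : Module.finrank ℂ (stabSpace S) = 2 ^ n / S.ncard :=
    (Nat.div_eq_of_eq_mul_left hpos key.symm).symm
  refine ⟨hdiv, fun r hr => ?_⟩
  have hrn : r ≤ n := by
    rw [hr] at key
    exact (Nat.pow_dvd_pow_iff_le_right (by norm_num)).mp (Dvd.intro_left _ key)
  rw [hdiv, hr, Nat.pow_div hrn (by norm_num)]

end
end

section
/- Let S be the subgroup of Gⁿ generated by pairwise commuting g₁,…,g_r with −I ∉ S, and let E₁,…,E_s ∈ Gⁿ. Then there exists a function φ : (ℤ/2ℤ)^r → Gⁿ such that φ(ε(E_j))·E_j ∈ S for every j ∈ {1,…,s}, if and only if for all j, k ∈ {1,…,s}: whenever E_j⁻¹·E_k lies in the centralizer C(S) of S in Gⁿ, it in fact lies in S. -/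
/-!
Two structural facts about the Pauli group are used. It is closed under products and inverses
(`pauliGroup_mul`, `pauliGroup_inv`), every element having order dividing four; and any two of its
elements commute or anticommute (`pauliGroup_comm_or_anti`). Both reduce, through the mixed-product
rule for Kronecker products, to the sixteen products of single-qubit Pauli matrices.

Consequently `Eⱼ` and `Eₖ` have the same syndrome exactly when `Eⱼ⁻¹ Eₖ` commutes with every
generator, that is, centralizes `S`. If `φ` corrects the errors and `Eⱼ⁻¹ Eₖ` centralizes `S`, then
the same matrix `A = φ(ε(Eⱼ)) = φ(ε(Eₖ))` brings both errors into `S`, so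
`Eⱼ⁻¹ Eₖ = (A Eⱼ)⁻¹ (A Eₖ)` lies in `S`. Conversely, let `φ(e) = Eⱼ⁻¹` for a chosen `j` with
syndrome `e`: then `φ(ε(Eₖ)) Eₖ = Eⱼ⁻¹ Eₖ` centralizes `S`, hence lies in `S`.
The submonoid closure of the generators is a group because each generator has finite order
(`exists_inv_of_mem_closure`).
-/


open Matrix Kronecker
open scoped Classical

noncomputable section

lemma phase_mul {a b : ℂ} (ha : a ∈ PauliPhase) (hb : b ∈ PauliPhase) : a * b ∈ PauliPhase := by
  simp only [PauliPhase, Set.mem_insert_iff, Set.mem_singleton_iff] at *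
  rcases ha with rfl | rfl | rfl | rfl <;> rcases hb with rfl | rfl | rfl | rfl <;> simp

lemma phase_pow_four {a : ℂ} (ha : a ∈ PauliPhase) : a ^ 4 = 1 := by
  simp only [PauliPhase, Set.mem_insert_iff, Set.mem_singleton_iff] at ha
  rcases ha with rfl | rfl | rfl | rfl <;> norm_num [Complex.I_pow_four, neg_pow]

/-- The label of a product of two Pauli matrices is the bitwise exclusive or of their labels. -/
lemma pauliMat_mul (a b : Fin 4) :
    ∃ c ∈ PauliPhase, PauliMat a * PauliMat b = c • PauliMat (a ^^^ b) := by
  simp only [PauliPhase, Set.mem_insert_iff, Set.mem_singleton_iff, exists_eq_or_imp,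
    exists_eq_left]
  fin_cases a <;> fin_cases b <;> simp [PauliMat, Matrix.one_fin_two]

lemma pauliMat_sq (a : Fin 4) : PauliMat a * PauliMat a = 1 := by
  fin_cases a <;> simp [PauliMat, Matrix.one_fin_two]

lemma pauliMat_comm_or_anti (a b : Fin 4) :
    PauliMat a * PauliMat b = PauliMat b * PauliMat a ∨
      PauliMat a * PauliMat b = -(PauliMat b * PauliMat a) := by
  fin_cases a <;> fin_cases b <;> simp [PauliMat, Matrix.one_fin_two]

/-- Products of Pauli words are computed one tensor factor at a time (mixed-product rule). -/
lemma pauliWord_succ_mul (n : ℕ) (P Q : Fin (n + 1) → Fin 4) :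
    pauliWord (n + 1) P * pauliWord (n + 1) Q =
      Matrix.reindex (finProdFinEquiv.trans (finCongr (by ring)))
        (finProdFinEquiv.trans (finCongr (by ring)))
        (Matrix.kroneckerMap (· * ·) (PauliMat (P 0) * PauliMat (Q 0))
          (pauliWord n (fun j => P j.succ) * pauliWord n (fun j => Q j.succ))) := by
  simp only [pauliWord, Matrix.reindex_apply]
  rw [Matrix.submatrix_mul_equiv]
  congr 1
  exact (Matrix.mul_kronecker_mul _ _ _ _).symm

lemma pauliWord_mul (n : ℕ) (P Q : Fin n → Fin 4) :
    ∃ c ∈ PauliPhase, pauliWord n P * pauliWord n Q = c • pauliWord n (fun j => P j ^^^ Q j) := by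
  induction n with
  | zero => exact ⟨1, by simp [PauliPhase], by simp [pauliWord]⟩
  | succ n ih =>
    obtain ⟨c, hc, h⟩ := ih (fun j => P j.succ) (fun j => Q j.succ)
    obtain ⟨d, hd, h'⟩ := pauliMat_mul (P 0) (Q 0)
    refine ⟨d * c, phase_mul hd hc, ?_⟩
    rw [pauliWord_succ_mul, h, h']
    ext i j
    simp [pauliWord]
    ring

lemma pauliWord_sq (n : ℕ) (P : Fin n → Fin 4) : pauliWord n P * pauliWord n P = 1 := by
  induction n with
  | zero => simp [pauliWord]
  | succ n ih =>
    rw [pauliWord_succ_mul, ih, pauliMat_sq, Matrix.reindex_apply]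
    erw [Matrix.one_kronecker_one]
    exact Matrix.submatrix_one_equiv _

lemma pauliWord_comm_or_anti (n : ℕ) (P Q : Fin n → Fin 4) :
    pauliWord n P * pauliWord n Q = pauliWord n Q * pauliWord n P ∨
      pauliWord n P * pauliWord n Q = -(pauliWord n Q * pauliWord n P) := by
  induction n with
  | zero => simp [pauliWord]
  | succ n ih =>
    rw [pauliWord_succ_mul, pauliWord_succ_mul]
    rcases ih (fun j => P j.succ) (fun j => Q j.succ) with h | h <;>
    rcases pauliMat_comm_or_anti (P 0) (Q 0) with h' | h' <;> rw [h, h']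
    · exact Or.inl rfl
    · right; ext i j; simp
    · right; ext i j; simp
    · left; ext i j; simp

lemma pauliGroup_mul {n : ℕ} {A B : Matrix (Fin (2 ^ n)) (Fin (2 ^ n)) ℂ}
    (hA : A ∈ PauliGroup n) (hB : B ∈ PauliGroup n) : A * B ∈ PauliGroup n := by
  obtain ⟨a, ha, P, rfl⟩ := hA
  obtain ⟨b, hb, Q, rfl⟩ := hB
  obtain ⟨c, hc, h⟩ := pauliWord_mul n P Q
  refine ⟨a * b * c, phase_mul (phase_mul ha hb) hc, fun j => P j ^^^ Q j, ?_⟩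
  rw [smul_mul_smul_comm, h, smul_smul]

lemma pauliGroup_pow_four {n : ℕ} {A : Matrix (Fin (2 ^ n)) (Fin (2 ^ n)) ℂ}
    (hA : A ∈ PauliGroup n) : A ^ 4 = 1 := by
  obtain ⟨a, ha, P, rfl⟩ := hA
  rw [smul_pow, phase_pow_four ha, one_smul, show 4 = 2 * 2 from rfl, pow_mul, sq (pauliWord n P),
    pauliWord_sq, one_pow]

lemma pauliGroup_isUnit_det {n : ℕ} {A : Matrix (Fin (2 ^ n)) (Fin (2 ^ n)) ℂ}
    (hA : A ∈ PauliGroup n) : IsUnit A.det :=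
  (Matrix.isUnit_iff_isUnit_det A).1 (IsUnit.of_pow_eq_one (pauliGroup_pow_four hA) (by norm_num))

lemma pauliGroup_inv {n : ℕ} {A : Matrix (Fin (2 ^ n)) (Fin (2 ^ n)) ℂ}
    (hA : A ∈ PauliGroup n) : A⁻¹ ∈ PauliGroup n := by
  have h : A⁻¹ = A * (A * A) := by
    apply Matrix.inv_eq_right_inv
    rw [← pauliGroup_pow_four hA]
    noncomm_ring
  rw [h]
  exact pauliGroup_mul hA (pauliGroup_mul hA hA)

lemma pauliGroup_comm_or_anti {n : ℕ} {A B : Matrix (Fin (2 ^ n)) (Fin (2 ^ n)) ℂ}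
    (hA : A ∈ PauliGroup n) (hB : B ∈ PauliGroup n) : A * B = B * A ∨ A * B = -(B * A) := by
  obtain ⟨a, ha, P, rfl⟩ := hA
  obtain ⟨b, hb, Q, rfl⟩ := hB
  rw [smul_mul_smul_comm, smul_mul_smul_comm, mul_comm b a]
  rcases pauliWord_comm_or_anti n P Q with h | h <;> rw [h]
  · exact Or.inl rfl
  · exact Or.inr (smul_neg _ _)

/-- The submonoid generated by Pauli elements is closed under inverses. -/
lemma exists_inv_of_mem_closure {n r : ℕ} {gs : Fin r → Matrix (Fin (2 ^ n)) (Fin (2 ^ n)) ℂ}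
    (hgs : ∀ i, gs i ∈ PauliGroup n) {a : Matrix (Fin (2 ^ n)) (Fin (2 ^ n)) ℂ}
    (ha : a ∈ Submonoid.closure (Set.range gs)) :
    ∃ b ∈ Submonoid.closure (Set.range gs), b * a = 1 := by
  induction ha using Submonoid.closure_induction with
  | mem x hx =>
    obtain ⟨i, rfl⟩ := hx
    refine ⟨gs i ^ 3, pow_mem (Submonoid.subset_closure (Set.mem_range_self i)) 3, ?_⟩
    rw [← pow_succ, pauliGroup_pow_four (hgs i)]
  | one => exact ⟨1, one_mem _, one_mul 1⟩
  | mul x y _ _ hx hy =>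
    obtain ⟨x', hx', h1⟩ := hx
    obtain ⟨y', hy', h2⟩ := hy
    refine ⟨y' * x', mul_mem hy' hx', ?_⟩
    rw [mul_assoc, ← mul_assoc x', h1, one_mul, h2]

lemma commute_of_mem_closure {n r : ℕ} {gs : Fin r → Matrix (Fin (2 ^ n)) (Fin (2 ^ n)) ℂ}
    {u : Matrix (Fin (2 ^ n)) (Fin (2 ^ n)) ℂ} (hu : ∀ i, u * gs i = gs i * u)
    {t : Matrix (Fin (2 ^ n)) (Fin (2 ^ n)) ℂ} (ht : t ∈ Submonoid.closure (Set.range gs)) :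
    u * t = t * u := by
  have h : Submonoid.closure (Set.range gs) ≤ Submonoid.centralizer {u} := by
    rw [Submonoid.closure_le]
    rintro _ ⟨i, rfl⟩
    rintro _ rfl
    exact hu i
  exact Submonoid.mem_centralizer_iff.1 (h ht) u rfl

/-- If `A⁻¹ * B` commutes with every generator, then `A` and `B` have equal syndromes. -/
lemma syndrome_eq_of_commute {n r : ℕ} {gs : Fin r → Matrix (Fin (2 ^ n)) (Fin (2 ^ n)) ℂ}
    {A B : Matrix (Fin (2 ^ n)) (Fin (2 ^ n)) ℂ} (hA : A ∈ PauliGroup n) (hB : B ∈ PauliGroup n)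
    (h : ∀ i, (A⁻¹ * B) * gs i = gs i * (A⁻¹ * B)) : syndrome gs A = syndrome gs B := by
  have hBA : B = A * (A⁻¹ * B) := by
    rw [Matrix.mul_nonsing_inv_cancel_left _ _ (pauliGroup_isUnit_det hA)]
  have hu : IsUnit (A⁻¹ * B) := (Matrix.isUnit_iff_isUnit_det _).2
    (pauliGroup_isUnit_det (pauliGroup_mul (pauliGroup_inv hA) hB))
  have key : ∀ i, A * gs i = gs i * A ↔ B * gs i = gs i * B := fun i => by
    have h1 : B * gs i = A * gs i * (A⁻¹ * B) := by
      conv_lhs => rw [hBA]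
      rw [mul_assoc, h i, mul_assoc]
    have h2 : gs i * B = gs i * A * (A⁻¹ * B) := by
      conv_lhs => rw [hBA]
      rw [mul_assoc]
    rw [h1, h2, hu.mul_left_inj]
  funext i
  simp only [syndrome, key i]

/-- If `A` and `B` have equal syndromes, then `A⁻¹ * B` commutes with every generator. The
dichotomy between commuting and anticommuting is what makes a nonzero syndrome bit informative. -/
lemma commute_of_syndrome_eq {n r : ℕ} {gs : Fin r → Matrix (Fin (2 ^ n)) (Fin (2 ^ n)) ℂ}
    (hgs : ∀ i, gs i ∈ PauliGroup n)
    {A B : Matrix (Fin (2 ^ n)) (Fin (2 ^ n)) ℂ} (hA : A ∈ PauliGroup n) (hB : B ∈ PauliGroup n)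
    (h : syndrome gs A = syndrome gs B) (i : Fin r) :
    (A⁻¹ * B) * gs i = gs i * (A⁻¹ * B) := by
  have hd := pauliGroup_isUnit_det hA
  have hi : (A * gs i = gs i * A) ↔ (B * gs i = gs i * B) := by
    have h' := congrFun h i
    simp only [syndrome] at h'
    by_cases h1 : A * gs i = gs i * A <;> by_cases h2 : B * gs i = gs i * B <;>
      simp_all
  have hAu : IsUnit A := (Matrix.isUnit_iff_isUnit_det _).2 hd
  -- It suffices to check the identity after multiplying by `A` on the left; the two signs agree.
  apply hAu.mul_left_cancel
  rw [← mul_assoc, ← mul_assoc A (gs i), Matrix.mul_nonsing_inv_cancel_left _ _ hd]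
  by_cases h1 : A * gs i = gs i * A
  · rw [hi.1 h1, h1, mul_assoc, Matrix.mul_nonsing_inv_cancel_left _ _ hd]
  · rw [(pauliGroup_comm_or_anti hB (hgs i)).resolve_left (mt hi.2 h1),
      (pauliGroup_comm_or_anti hA (hgs i)).resolve_left h1, neg_mul, mul_assoc,
      Matrix.mul_nonsing_inv_cancel_left _ _ hd]

/-- an error-correcting function φ with φ(ε(Eⱼ))·Eⱼ ∈ S for all j exists
iff whenever Eⱼ⁻¹·Eₖ lies in the centralizer of S in Gⁿ it lies in S. -/
theorem errorCorrectingFunction_exists_iff {n r s : ℕ}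
    (gs : Fin r → Matrix (Fin (2 ^ n)) (Fin (2 ^ n)) ℂ)
    (hgs : ∀ i, gs i ∈ PauliGroup n)
    (hcomm : ∀ i j, gs i * gs j = gs j * gs i)
    (hS : (-1 : Matrix (Fin (2 ^ n)) (Fin (2 ^ n)) ℂ) ∉ Submonoid.closure (Set.range gs))
    (E : Fin s → Matrix (Fin (2 ^ n)) (Fin (2 ^ n)) ℂ)
    (hE : ∀ j, E j ∈ PauliGroup n) :
    (∃ φ : (Fin r → ZMod 2) → Matrix (Fin (2 ^ n)) (Fin (2 ^ n)) ℂ,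
        ∀ j, φ (syndrome gs (E j)) * E j ∈ Submonoid.closure (Set.range gs)) ↔
      (∀ j k, ((E j)⁻¹ * E k ∈ PauliGroup n ∧
          ∀ t ∈ Submonoid.closure (Set.range gs),
            ((E j)⁻¹ * E k) * t = t * ((E j)⁻¹ * E k)) →
        (E j)⁻¹ * E k ∈ Submonoid.closure (Set.range gs)) := by
  constructor
  · rintro ⟨φ, hφ⟩ j k ⟨-, hc⟩
    have hsyn : syndrome gs (E j) = syndrome gs (E k) :=
      syndrome_eq_of_commute (hE j) (hE k) fun i => hc _ (Submonoid.subset_closure ⟨i, rfl⟩)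
    have hj := hφ j
    have hk := hφ k
    rw [← hsyn] at hk
    obtain ⟨b, hb, hba⟩ := exists_inv_of_mem_closure hgs hj
    -- `b` inverts `φ(ε) * E j`, so `b * φ(ε)` is the inverse of `E j`.
    have hinv : (E j)⁻¹ = b * φ (syndrome gs (E j)) :=
      Matrix.inv_eq_left_inv (by rw [mul_assoc, hba])
    rw [hinv, mul_assoc]
    exact mul_mem hb hk
  · intro H
    -- The value at syndromes that do not occur is irrelevant.
    refine ⟨fun e => if h : ∃ j, syndrome gs (E j) = e then (E h.choose)⁻¹ else 1, fun k => ?_⟩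
    have hex : ∃ j, syndrome gs (E j) = syndrome gs (E k) := ⟨k, rfl⟩
    simp only [dif_pos hex]
    exact H _ _ ⟨pauliGroup_mul (pauliGroup_inv (hE _)) (hE k), fun t ht =>
      commute_of_mem_closure (commute_of_syndrome_eq hgs (hE _) (hE k) hex.choose_spec) ht⟩

end
end

section
/- For the five-qubit code stabilizer S₅: every Pauli word g on 5 qubits that is supported in at most two qubits and is not the identity anticommutes with at least one of the generators g₁, g₂, g₃, g₄; equivalently, the only Pauli word supported in any two-element subset of {1,…,5} lying in the centralizer of S₅ in G⁵ is the identity. -/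
/-!
Single-qubit Pauli matrices commute or anticommute, and by the mixed-product rule for Kronecker
products two Pauli words commute up to the product of the signs of their factors
(`pauliWord_mul_comm`). It remains to see that a nonidentity word of weight at most two has sign
`-1` against one of the four generators. This concerns only the letters of the word, so it is a
finite check over two positions and two letters (`exists_sign_eq_neg_one`).
-/

open Matrix Kronecker
open scoped Classical

noncomputable section

/-- The four generators of the five-qubit code stabilizer:
g₁ = XZZXI, g₂ = IXZZX, g₃ = XIXZZ, g₄ = ZXIXZ. -/
def fiveGens : Fin 4 → Matrix (Fin (2 ^ 5)) (Fin (2 ^ 5)) ℂ :=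
  ![pauliWord 5 ![1, 3, 3, 1, 0], pauliWord 5 ![0, 1, 3, 3, 1],
    pauliWord 5 ![1, 0, 1, 3, 3], pauliWord 5 ![3, 1, 0, 1, 3]]

/-- The commutation sign of two single-qubit Pauli matrices: `-1` when they are distinct and
neither is the identity (they anticommute), `1` otherwise (they commute). -/
def pauliSign (a b : Fin 4) : ℤ :=
  if a.val = 0 ∨ b.val = 0 ∨ a.val = b.val then 1 else -1

lemma pauliMat_mul_comm (a b : Fin 4) :
    PauliMat a * PauliMat b = (pauliSign a b : ℂ) • (PauliMat b * PauliMat a) := by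
  fin_cases a <;> fin_cases b <;> ext i j <;> fin_cases i <;> fin_cases j <;>
    simp [PauliMat, pauliSign]

/-- Two Pauli words commute up to the product of the commutation signs of their factors. -/
lemma pauliWord_mul_comm (n : ℕ) (P Q : Fin n → Fin 4) :
    pauliWord n P * pauliWord n Q =
      ((∏ j, pauliSign (P j) (Q j) : ℤ) : ℂ) • (pauliWord n Q * pauliWord n P) := by
  induction n with
  | zero => simp [pauliWord]
  | succ n ih =>
    simp only [pauliWord, Matrix.reindex_apply, Matrix.submatrix_mul_equiv]
    rw [← Matrix.mul_kronecker_mul, ← Matrix.mul_kronecker_mul, ih, pauliMat_mul_comm,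
      Matrix.smul_kronecker, Matrix.kronecker_smul, smul_smul, Fin.prod_univ_succ]
    push_cast
    rfl

lemma pauliWord_zero (n : ℕ) : pauliWord n (fun _ => 0) = 1 := by
  induction n with
  | zero => rfl
  | succ n ih =>
    simp only [pauliWord, ih, PauliMat]
    rw [show Matrix.kroneckerMap (· * ·) (1 : Matrix (Fin 2) (Fin 2) ℂ)
      (1 : Matrix (Fin (2 ^ n)) (Fin (2 ^ n)) ℂ) = 1 from Matrix.one_kronecker_one]
    exact Matrix.submatrix_one_equiv _

/-- The letters of the four generators, as words in `I, X, Y, Z` (indexed `0, 1, 2, 3`). -/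
def fiveWords : Fin 4 → Fin 5 → Fin 4 :=
  ![![1, 3, 3, 1, 0], ![0, 1, 3, 3, 1], ![1, 0, 1, 3, 3], ![3, 1, 0, 1, 3]]

lemma fiveGens_eq (i : Fin 4) : fiveGens i = pauliWord 5 (fiveWords i) := by
  fin_cases i <;> rfl

/-- The finite check behind the theorem: a word with letters `a, b` at positions `k, l` and the
identity elsewhere has a nontrivial sign against some generator, unless it is the identity. -/
lemma exists_sign_eq_neg_one : ∀ k l : Fin 5, ∀ a b : Fin 4,
    (∀ j : Fin 5, (if j.val = k.val then a else if j.val = l.val then b else 0).val = 0) ∨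
    ∃ i : Fin 4, ∏ j : Fin 5, pauliSign
      (if j.val = k.val then a else if j.val = l.val then b else 0) (fiveWords i j) = -1 := by
  decide +kernel

/-- every non-identity Pauli word on 5 qubits supported in at most two
qubits anticommutes with at least one of the four generators of S₅. -/
theorem fiveQubit_weight_two_anticommutes
    (P : Fin 5 → Fin 4)
    (hsupp : ∃ m : Finset (Fin 5), m.card ≤ 2 ∧ ∀ i ∉ m, P i = 0)
    (hne : pauliWord 5 P ≠ 1) :
    ∃ i : Fin 4, pauliWord 5 P * fiveGens i = -(fiveGens i * pauliWord 5 P) := by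
  obtain ⟨m, hm, hP⟩ := hsupp
  -- A set of at most two qubits lies in some `{k, l}`, where `k = l` is allowed.
  obtain ⟨k, l, hkl⟩ : ∃ k l : Fin 5, ∀ j ∈ m, j = k ∨ j = l := by
    rcases Nat.lt_or_ge m.card 2 with h | h
    · obtain ⟨k, hk⟩ := Finset.card_le_one_iff_subset_singleton.mp (Nat.le_of_lt_succ h)
      exact ⟨k, k, fun j hj => Or.inl (Finset.mem_singleton.mp (hk hj))⟩
    · obtain ⟨k, l, -, rfl⟩ := Finset.card_eq_two.mp (le_antisymm hm h)
      exact ⟨k, l, fun j hj => by simpa using hj⟩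
  have hPj : ∀ j : Fin 5,
      (if j.val = k.val then P k else if j.val = l.val then P l else 0) = P j := by
    intro j
    split_ifs with h₁ h₂
    · rw [Fin.ext h₁]
    · rw [Fin.ext h₂]
    · refine (hP j fun hj => ?_).symm
      rcases hkl j hj with rfl | rfl
      · exact h₁ rfl
      · exact h₂ rfl
  have key := exists_sign_eq_neg_one k l (P k) (P l)
  simp only [hPj] at key
  rcases key with h | ⟨i, hi⟩
  · exact absurd ((congrArg (pauliWord 5) (funext fun j => Fin.ext (h j))).trans
      (pauliWord_zero 5)) hne
  · refine ⟨i, ?_⟩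
    rw [fiveGens_eq, pauliWord_mul_comm, hi]
    simp

end
end

section
/- For each of the four Pauli words g ∈ { XIXIXII, IIIIIIX, YIYIYIZ, ZIZIZIY } on 7 qubits, the product (IIIIIIX)·g is a scalar multiple (by some c ∈ {1, −1, i, −i}) of an element of the Steane stabilizer S₇. Consequently every Pauli word supported in {1,3,5,7} with syndrome (0,0,0,1,1,1) is corrected by applying IIIIIIX; in particular the Steane code corrects some errors affecting four qubits. -/
/-!
Pauli words multiply letterwise up to a power of `i`: coding `I, X, Y, Z` as `0, 1, 2, 3`, the
letter of a product is the bitwise xor (`pauliWord_mul`). Since a Pauli word is a nonzero matrix,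
two words commute exactly when the exponents of `i` for the two orders of multiplication agree
modulo `4` (`pauliWord_commute_iff`), so a syndrome is read off from the letters.

With `E = IIIIIIX`, up to phase `E·XIXIXII = g₃`, `E·E = 1`, `E·YIYIYIZ = YIYIYIY = g₃g₆` and
`E·ZIZIZIY = g₆`, which is the first claim. For the second, the six commutation conditions on a
word supported in `{1,3,5,7}` leave only these four words, by a finite check over the `4⁴`
candidates (`letters_of_syndrome`).
-/

open Matrix Kronecker
open scoped Classical

noncomputable section

/-- The six generators of the Steane code stabilizer:
g₁ = IIIXXXX, g₂ = IXXIIXX, g₃ = XIXIXIX, g₄ = IIIZZZZ, g₅ = IZZIIZZ, g₆ = ZIZIZIZ. -/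
def steaneGens : Fin 6 → Matrix (Fin (2 ^ 7)) (Fin (2 ^ 7)) ℂ :=
  ![pauliWord 7 ![0, 0, 0, 1, 1, 1, 1], pauliWord 7 ![0, 1, 1, 0, 0, 1, 1],
    pauliWord 7 ![1, 0, 1, 0, 1, 0, 1], pauliWord 7 ![0, 0, 0, 3, 3, 3, 3],
    pauliWord 7 ![0, 3, 3, 0, 0, 3, 3], pauliWord 7 ![3, 0, 3, 0, 3, 0, 3]]

/-- The exponent `k` with `σ_p σ_q = iᵏ σ_{p xor q}`. -/
def phaseExp : Fin 4 → Fin 4 → ℕ :=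
  ![![0, 0, 0, 0], ![0, 0, 1, 3], ![0, 3, 0, 1], ![0, 1, 3, 0]]

/-- The letterwise product of two Pauli words, phases dropped. -/
def wordMul {n : ℕ} (P Q : Fin n → Fin 4) : Fin n → Fin 4 := fun j => P j ^^^ Q j

/-- The exponent of `i` in the product of two Pauli words. -/
def wordExp {n : ℕ} (P Q : Fin n → Fin 4) : ℕ := ∑ j, phaseExp (P j) (Q j)

lemma PauliMat_mul (p q : Fin 4) :
    PauliMat p * PauliMat q = Complex.I ^ phaseExp p q • PauliMat (p ^^^ q) := by
  have h3 : Complex.I ^ 3 = -Complex.I := Complex.I_pow_three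
  fin_cases p <;> fin_cases q <;>
    (ext a b; fin_cases a <;> fin_cases b <;> simp [PauliMat, phaseExp, h3])

lemma pauliWord_mul_s15 (n : ℕ) (P Q : Fin n → Fin 4) :
    pauliWord n P * pauliWord n Q = Complex.I ^ wordExp P Q • pauliWord n (wordMul P Q) := by
  induction n with
  | zero => simp [pauliWord, wordExp]
  | succ n ih =>
    have h := ih (fun j => P j.succ) (fun j => Q j.succ)
    have hexp : wordExp P Q =
        phaseExp (P 0) (Q 0) + wordExp (fun j => P j.succ) (fun j => Q j.succ) := by
      simp [wordExp, Fin.sum_univ_succ]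
    simp only [pauliWord, Matrix.reindex_apply, Matrix.submatrix_mul_equiv]
    rw [← Matrix.mul_kronecker_mul, h, PauliMat_mul, Matrix.smul_kronecker,
      Matrix.kronecker_smul, smul_smul, ← pow_add, ← hexp]
    rfl

lemma pauliWord_ne_zero (n : ℕ) (P : Fin n → Fin 4) : pauliWord n P ≠ 0 := by
  intro h
  have hsq := pauliWord_mul_s15 n P P
  have hexp : wordExp P P = 0 :=
    Finset.sum_eq_zero fun j _ => (by decide : ∀ p : Fin 4, phaseExp p p = 0) (P j)
  have hmul : wordMul P P = fun _ => 0 :=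
    funext fun j => (by decide : ∀ p : Fin 4, p ^^^ p = 0) (P j)
  rw [hexp, hmul, pauliWord_zero, h] at hsq
  simp at hsq

lemma pauliWord_commute_iff (n : ℕ) (P Q : Fin n → Fin 4) :
    pauliWord n P * pauliWord n Q = pauliWord n Q * pauliWord n P ↔
      wordExp P Q % 4 = wordExp Q P % 4 := by
  have hcomm : wordMul Q P = wordMul P Q :=
    funext fun j => (by decide : ∀ p q : Fin 4, q ^^^ p = p ^^^ q) (P j) (Q j)
  have hord : orderOf Complex.I = 4 := by
    have h := orderOf_eq_prime_pow (x := Complex.I) (p := 2) (n := 1)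
      (by norm_num) (by norm_num)
    simpa using h
  rw [pauliWord_mul_s15, pauliWord_mul_s15, hcomm,
    (smul_left_injective ℂ (pauliWord_ne_zero n (wordMul P Q))).eq_iff,
    ← pow_mod_orderOf Complex.I (wordExp P Q), ← pow_mod_orderOf Complex.I (wordExp Q P), hord]
  have hprim : IsPrimitiveRoot Complex.I 4 := hord ▸ IsPrimitiveRoot.orderOf Complex.I
  exact ⟨hprim.pow_inj (Nat.mod_lt _ (by norm_num)) (Nat.mod_lt _ (by norm_num)),
    fun h => by rw [h]⟩

lemma I_pow_mem_PauliPhase (k : ℕ) : Complex.I ^ k ∈ PauliPhase := by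
  induction k with
  | zero => simp [PauliPhase]
  | succ k ih =>
    rw [pow_succ]
    simp only [PauliPhase, Set.mem_insert_iff, Set.mem_singleton_iff] at ih ⊢
    rcases ih with h | h | h | h <;> simp [h]

/-- The letters of the six Steane generators. -/
def steaneWord : Fin 6 → Fin 7 → Fin 4 :=
  ![![0, 0, 0, 1, 1, 1, 1], ![0, 1, 1, 0, 0, 1, 1], ![1, 0, 1, 0, 1, 0, 1],
    ![0, 0, 0, 3, 3, 3, 3], ![0, 3, 3, 0, 0, 3, 3], ![3, 0, 3, 0, 3, 0, 3]]

lemma steaneGens_eq (i : Fin 6) : steaneGens i = pauliWord 7 (steaneWord i) := by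
  fin_cases i <;> rfl

/-- If the letters of `IIIIIIX·Q` are those of an element of the stabilizer, then the matrices
agree up to a phase. -/
lemma corrected_of_wordMul {Q R : Fin 7 → Fin 4}
    (hR : pauliWord 7 R ∈ Submonoid.closure (Set.range steaneGens))
    (h : wordMul ![0, 0, 0, 0, 0, 0, 1] Q = R) :
    ∃ c ∈ PauliPhase, ∃ t ∈ Submonoid.closure (Set.range steaneGens),
      pauliWord 7 ![0, 0, 0, 0, 0, 0, 1] * pauliWord 7 Q = c • t :=
  ⟨_, I_pow_mem_PauliPhase _, _, hR, by rw [pauliWord_mul_s15, h]⟩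

lemma steaneWord_mem (i : Fin 6) :
    pauliWord 7 (steaneWord i) ∈ Submonoid.closure (Set.range steaneGens) :=
  Submonoid.subset_closure ⟨i, steaneGens_eq i⟩

/-- `YIYIYIY` is in the stabilizer with sign `+1`: it equals `g₃g₆`, as `(XZ)^{⊗4} = (-iY)^{⊗4}`
and `(-i)⁴ = 1`. -/
lemma YIYIYIY_mem :
    pauliWord 7 ![2, 0, 2, 0, 2, 0, 2] ∈ Submonoid.closure (Set.range steaneGens) := by
  have h := mul_mem (steaneWord_mem 2) (steaneWord_mem 5)
  have hexp : wordExp (steaneWord 2) (steaneWord 5) = 4 * 3 := by decide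
  have hmul : wordMul (steaneWord 2) (steaneWord 5) = ![2, 0, 2, 0, 2, 0, 2] := by decide
  rwa [pauliWord_mul_s15, hexp, hmul, pow_mul, Complex.I_pow_four, one_pow, one_smul] at h

lemma one_word_mem :
    pauliWord 7 (fun _ => 0) ∈ Submonoid.closure (Set.range steaneGens) := by
  rw [pauliWord_zero]
  exact one_mem _

/-- The exhaustive check over the `4⁴` words supported in `{1,3,5,7}`. -/
lemma letters_of_syndrome : ∀ a b c d : Fin 4,
    (∀ i : Fin 6, (wordExp ![a, 0, b, 0, c, 0, d] (steaneWord i) % 4 =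
      wordExp (steaneWord i) ![a, 0, b, 0, c, 0, d] % 4) ↔ i < 3) →
    (a = 1 ∧ b = 1 ∧ c = 1 ∧ d = 0) ∨ (a = 0 ∧ b = 0 ∧ c = 0 ∧ d = 1) ∨
      (a = 2 ∧ b = 2 ∧ c = 2 ∧ d = 3) ∨ (a = 3 ∧ b = 3 ∧ c = 3 ∧ d = 2) := by
  decide +kernel

/-- for each g ∈ {XIXIXII, IIIIIIX, YIYIYIZ, ZIZIZIY}, the product
IIIIIIX·g is a phase times an element of S₇; consequently every Pauli word supported
in {1,3,5,7} with syndrome (0,0,0,1,1,1) is corrected by applying IIIIIIX. -/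
theorem steane_corrects_1357_class :
    (∀ g ∈ ({pauliWord 7 ![1, 0, 1, 0, 1, 0, 0], pauliWord 7 ![0, 0, 0, 0, 0, 0, 1],
          pauliWord 7 ![2, 0, 2, 0, 2, 0, 3], pauliWord 7 ![3, 0, 3, 0, 3, 0, 2]} :
          Set (Matrix (Fin (2 ^ 7)) (Fin (2 ^ 7)) ℂ)),
      ∃ c ∈ PauliPhase, ∃ t ∈ Submonoid.closure (Set.range steaneGens),
        pauliWord 7 ![0, 0, 0, 0, 0, 0, 1] * g = c • t) ∧
    (∀ P : Fin 7 → Fin 4, (∀ i ∉ ({0, 2, 4, 6} : Finset (Fin 7)), P i = 0) →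
      syndrome steaneGens (pauliWord 7 P) = ![0, 0, 0, 1, 1, 1] →
      ∃ c ∈ PauliPhase, ∃ t ∈ Submonoid.closure (Set.range steaneGens),
        pauliWord 7 ![0, 0, 0, 0, 0, 0, 1] * pauliWord 7 P = c • t) := by
  have h1 := corrected_of_wordMul (Q := ![1, 0, 1, 0, 1, 0, 0]) (steaneWord_mem 2) (by decide)
  have h2 := corrected_of_wordMul (Q := ![0, 0, 0, 0, 0, 0, 1]) one_word_mem (by decide)
  have h3 := corrected_of_wordMul (Q := ![2, 0, 2, 0, 2, 0, 3]) YIYIYIY_mem (by decide)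
  have h4 := corrected_of_wordMul (Q := ![3, 0, 3, 0, 3, 0, 2]) (steaneWord_mem 5) (by decide)
  refine ⟨?_, ?_⟩
  · rintro g (rfl | rfl | rfl | rfl)
    exacts [h1, h2, h3, h4]
  · intro P hsupp hsyn
    have hP : P = ![P 0, 0, P 2, 0, P 4, 0, P 6] := by
      funext j
      fin_cases j
      exacts [rfl, hsupp 1 (by decide), rfl, hsupp 3 (by decide), rfl, hsupp 5 (by decide), rfl]
    have hcond (i : Fin 6) :
        wordExp P (steaneWord i) % 4 = wordExp (steaneWord i) P % 4 ↔ i < 3 := by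
      have hi := congrFun hsyn i
      rw [syndrome, steaneGens_eq] at hi
      simp only [pauliWord_commute_iff] at hi
      -- The prescribed syndrome vanishes exactly at the first three generators.
      have hval : (![0, 0, 0, 1, 1, 1] : Fin 6 → ZMod 2) i = if i < 3 then 0 else 1 := by
        clear hi; revert i; decide
      rw [hval] at hi
      split_ifs at hi with h h' h'
      · exact iff_of_true h h'
      · exact absurd hi (by decide)
      · exact absurd hi (by decide)
      · exact iff_of_false h h'
    rw [hP] at hcond ⊢
    rcases letters_of_syndrome _ _ _ _ hcond with
      ⟨ha, hb, hc, hd⟩ | ⟨ha, hb, hc, hd⟩ | ⟨ha, hb, hc, hd⟩ | ⟨ha, hb, hc, hd⟩ <;>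
      rw [ha, hb, hc, hd]
    exacts [h1, h2, h3, h4]

end
end

section
/- The eight Shor-code generators pairwise commute, the subgroup S₉ ⊆ G⁹ they generate has order 256, −I ∉ S₉, and there exists a function φ : (ℤ/2ℤ)⁸ → G⁹ such that for every Pauli word g on 9 qubits supported in at most one qubit, c·φ(ε(g))·g ∈ S₉ for some c ∈ {1, −1, i, −i} (i.e., the Shor code corrects every single-qubit error). -/
open Matrix Kronecker
open scoped Classical

/-! The proof uses the symplectic description of Pauli words. For `x z : Fin n → ZMod 2` let
`weyl n x z` be the tensor product of the matrices `X ^ xⱼ * Z ^ zⱼ`. These satisfy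
`weyl x z * weyl x' z' = (-1) ^ (z ⬝ x') • weyl (x + x') (z + z')` (`weyl_mul`), every Pauli word is
a phase times a Weyl matrix (`pauliWord_eq`), and a Weyl matrix with `(x, z) ≠ 0` has trace zero
(`weyl_eq_zero_of_trace`).

Every Shor generator is purely of `X` type or purely of `Z` type, and the `Z` parts are orthogonal
to the `X` parts, so no signs arise when generators are multiplied: `b ↦ weyl (stabX b) (stabZ b)`
is a homomorphism `stabHom` from `(ℤ/2)⁸`, and its range is the group generated
(`closure_eq_mrange`). The trace shows that it is injective, whence the order 256, and that `-1`
is not in its range.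

For the error correction the decoder reads off an `X` error from the six `Z`-type syndrome bits,
and the block of a `Z` error from the two `X`-type bits; it applies `Z` to the first qubit of that
block, since `Z` errors within one block differ by a stabilizer. By `syndrome_eq` the syndrome is
given by the symplectic form, and the remaining claim is a check over the 36 pairs of a qubit and a Pauli letter. -/

noncomputable section

/-- The eight generators of the Shor code stabilizer: g₁ = ZZIIIIIII, g₂ = IZZIIIIII,
g₃ = IIIZZIIII, g₄ = IIIIZZIII, g₅ = IIIIIIZZI, g₆ = IIIIIIIZZ, g₇ = XXXXXXIII,
g₈ = IIIXXXXXX. -/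
def shorGens : Fin 8 → Matrix (Fin (2 ^ 9)) (Fin (2 ^ 9)) ℂ :=
  ![pauliWord 9 ![3, 3, 0, 0, 0, 0, 0, 0, 0], pauliWord 9 ![0, 3, 3, 0, 0, 0, 0, 0, 0],
    pauliWord 9 ![0, 0, 0, 3, 3, 0, 0, 0, 0], pauliWord 9 ![0, 0, 0, 0, 3, 3, 0, 0, 0],
    pauliWord 9 ![0, 0, 0, 0, 0, 0, 3, 3, 0], pauliWord 9 ![0, 0, 0, 0, 0, 0, 0, 3, 3],
    pauliWord 9 ![1, 1, 1, 1, 1, 1, 0, 0, 0], pauliWord 9 ![0, 0, 0, 1, 1, 1, 1, 1, 1]]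

/-! ### Tensor products of 2 × 2 matrices -/

/-- The Kronecker product of a family of `2 × 2` matrices, indexed in the same way as
`pauliWord`. -/
def kron : (n : ℕ) → (Fin n → Matrix (Fin 2) (Fin 2) ℂ) → Matrix (Fin (2 ^ n)) (Fin (2 ^ n)) ℂ
  | 0, _ => 1
  | n + 1, M =>
      Matrix.reindex (finProdFinEquiv.trans (finCongr (by ring)))
        (finProdFinEquiv.trans (finCongr (by ring)))
        (Matrix.kroneckerMap (· * ·) (M 0) (kron n (fun j => M j.succ)))

lemma pauliWord_eq_kron (n : ℕ) (P : Fin n → Fin 4) :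
    pauliWord n P = kron n (fun j => PauliMat (P j)) := by
  induction n with
  | zero => rfl
  | succ n ih => simp only [pauliWord, kron, ih]

lemma kron_mul (n : ℕ) (M N : Fin n → Matrix (Fin 2) (Fin 2) ℂ) :
    kron n M * kron n N = kron n (fun j => M j * N j) := by
  induction n with
  | zero => simp [kron]
  | succ n ih =>
    simp only [kron, ← ih, Matrix.reindex_apply, Matrix.submatrix_mul_equiv]
    rw [Matrix.mul_kronecker_mul]

lemma kron_one (n : ℕ) : kron n (fun _ => 1) = 1 := by
  induction n with
  | zero => rfl
  | succ n ih =>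
    simp only [kron, ih, Matrix.reindex_apply]
    rw [Matrix.one_kronecker_one, Matrix.submatrix_one_equiv]

lemma kron_smul (n : ℕ) (c : Fin n → ℂ) (M : Fin n → Matrix (Fin 2) (Fin 2) ℂ) :
    kron n (fun j => c j • M j) = (∏ j, c j) • kron n M := by
  induction n with
  | zero => simp [kron]
  | succ n ih =>
    simp only [kron, ih, Matrix.reindex_apply, Fin.prod_univ_succ]
    rw [Matrix.smul_kronecker, Matrix.kronecker_smul, smul_smul, Matrix.submatrix_smul]
    rfl

lemma trace_kron (n : ℕ) (M : Fin n → Matrix (Fin 2) (Fin 2) ℂ) :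
    (kron n M).trace = ∏ j, (M j).trace := by
  induction n with
  | zero => simp [kron]
  | succ n ih =>
    simp only [kron, Fin.prod_univ_succ, ← ih]
    rw [← Matrix.trace_kronecker]
    simp only [Matrix.trace, Matrix.diag, Matrix.reindex_apply, Matrix.submatrix_apply]
    exact Equiv.sum_comp (finProdFinEquiv.trans (finCongr _)).symm
      (fun i => (M 0 ⊗ₖ kron n fun j => M j.succ) i i)

/-! ### Weyl matrices -/

/-- The sign `(-1) ^ a` for `a : ZMod 2`. -/
def sgn (a : ZMod 2) : ℂ := if a = 0 then 1 else -1

lemma zmod_two_cases (a : ZMod 2) : a = 0 ∨ a = 1 := by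
  revert a; decide

lemma sgn_zero : sgn 0 = 1 := by simp [sgn]

lemma sgn_one : sgn 1 = -1 := by simp [sgn]

lemma sgn_ne_zero (a : ZMod 2) : sgn a ≠ 0 := by
  rcases zmod_two_cases a with rfl | rfl <;> simp [sgn_zero, sgn_one]

lemma sgn_add (a b : ZMod 2) : sgn (a + b) = sgn a * sgn b := by
  rcases zmod_two_cases a with rfl | rfl <;> rcases zmod_two_cases b with rfl | rfl <;>
    simp [sgn_zero, sgn_one, CharTwo.add_self_eq_zero]

lemma sgn_sum {ι : Type*} (s : Finset ι) (f : ι → ZMod 2) :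
    sgn (∑ i ∈ s, f i) = ∏ i ∈ s, sgn (f i) := by
  induction s using Finset.induction_on with
  | empty => simp [sgn_zero]
  | insert i s hi ih => rw [Finset.sum_insert hi, Finset.prod_insert hi, sgn_add, ih]

lemma sgn_injective : Function.Injective sgn := by
  intro a b h
  rcases zmod_two_cases a with rfl | rfl <;> rcases zmod_two_cases b with rfl | rfl <;>
    first
    | rfl
    | (exfalso; norm_num [sgn_zero, sgn_one] at h)

/-- The one-qubit Weyl matrix `X ^ x * Z ^ z`. -/
def weylOne (x z : ZMod 2) : Matrix (Fin 2) (Fin 2) ℂ :=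
  if x = 0 then !![1, 0; 0, sgn z] else !![0, sgn z; 1, 0]

lemma weylOne_mul (x z x' z' : ZMod 2) :
    weylOne x z * weylOne x' z' = sgn (z * x') • weylOne (x + x') (z + z') := by
  rcases zmod_two_cases x with rfl | rfl <;> rcases zmod_two_cases x' with rfl | rfl <;>
    rcases zmod_two_cases z with rfl | rfl <;>
    simp [weylOne, sgn_zero, sgn_one, sgn_add, CharTwo.add_self_eq_zero]

lemma weylOne_zero : weylOne 0 0 = 1 := by
  simp [weylOne, sgn_zero, Matrix.one_fin_two]

lemma trace_weylOne {x z : ZMod 2} (h : (weylOne x z).trace ≠ 0) : x = 0 ∧ z = 0 := by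
  rcases zmod_two_cases x with rfl | rfl <;> rcases zmod_two_cases z with rfl | rfl <;>
    simp [weylOne, sgn_one, Matrix.trace_fin_two] at h ⊢

/-- The `n`-qubit Weyl matrix: the tensor product of the `X ^ xⱼ * Z ^ zⱼ`. -/
def weyl (n : ℕ) (x z : Fin n → ZMod 2) : Matrix (Fin (2 ^ n)) (Fin (2 ^ n)) ℂ :=
  kron n (fun j => weylOne (x j) (z j))

lemma weyl_mul {n : ℕ} (x z x' z' : Fin n → ZMod 2) :
    weyl n x z * weyl n x' z' = sgn (z ⬝ᵥ x') • weyl n (x + x') (z + z') := by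
  simp only [weyl, kron_mul, weylOne_mul, kron_smul, dotProduct, sgn_sum, Pi.add_apply]

lemma weyl_zero (n : ℕ) : weyl n 0 0 = 1 := by
  simp [weyl, weylOne_zero, kron_one]

lemma weyl_eq_zero_of_trace {n : ℕ} {x z : Fin n → ZMod 2} (h : (weyl n x z).trace ≠ 0) :
    x = 0 ∧ z = 0 := by
  rw [weyl, trace_kron, Finset.prod_ne_zero_iff] at h
  exact ⟨funext fun j => (trace_weylOne (h j (Finset.mem_univ j))).1,
    funext fun j => (trace_weylOne (h j (Finset.mem_univ j))).2⟩

lemma weyl_ne_zero {n : ℕ} (x z : Fin n → ZMod 2) : weyl n x z ≠ 0 := by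
  intro h
  have h2 := weyl_mul x z x z
  have h0 : ∀ v : Fin n → ZMod 2, v + v = 0 := fun v =>
    funext fun j => CharTwo.add_self_eq_zero (v j)
  rw [h, zero_mul, h0, h0, weyl_zero] at h2
  exact smul_ne_zero (sgn_ne_zero _) one_ne_zero h2.symm

lemma weyl_comm_iff {n : ℕ} (x z x' z' : Fin n → ZMod 2) :
    weyl n x z * weyl n x' z' = weyl n x' z' * weyl n x z ↔ z ⬝ᵥ x' = z' ⬝ᵥ x := by
  rw [weyl_mul, weyl_mul, add_comm x', add_comm z']
  refine ⟨fun h => sgn_injective (smul_left_injective ℂ (weyl_ne_zero _ _) h), fun h => ?_⟩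
  rw [h]

/-! ### Pauli words as Weyl matrices -/

/-- The `X` exponent of a Pauli letter. -/
def xBit : Fin 4 → ZMod 2 := ![0, 1, 1, 0]

/-- The `Z` exponent of a Pauli letter. -/
def zBit : Fin 4 → ZMod 2 := ![0, 0, 1, 1]

/-- The phase of a Pauli letter relative to its Weyl matrix; nontrivial only for `Y = i X Z`. -/
def letterPhase : Fin 4 → ℂ := ![1, 1, Complex.I, 1]

lemma pauliMat_eq (a : Fin 4) : PauliMat a = letterPhase a • weylOne (xBit a) (zBit a) := by
  fin_cases a <;>
    simp [PauliMat, letterPhase, weylOne, xBit, zBit, sgn_zero, sgn_one, Matrix.one_fin_two]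

lemma pauliWord_eq (n : ℕ) (P : Fin n → Fin 4) :
    pauliWord n P =
      (∏ j, letterPhase (P j)) • weyl n (fun j => xBit (P j)) (fun j => zBit (P j)) := by
  simp only [pauliWord_eq_kron, pauliMat_eq, kron_smul, weyl]

lemma mem_pauliPhase_iff (c : ℂ) : c ∈ PauliPhase ↔ c ^ 4 = 1 := by
  simp only [PauliPhase, Set.mem_insert_iff, Set.mem_singleton_iff]
  constructor
  · rintro (rfl | rfl | rfl | rfl) <;> norm_num [Complex.I_pow_four, neg_pow]
  · intro h
    have h' : (c - 1) * ((c + 1) * ((c - Complex.I) * (c + Complex.I))) = 0 := by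
      linear_combination h - (c ^ 2 - 1) * Complex.I_sq
    simpa [sub_eq_zero, add_eq_zero_iff_eq_neg] using h'

lemma letterPhase_pow (a : Fin 4) : letterPhase a ^ 4 = 1 := by
  fin_cases a <;> simp [letterPhase]

lemma sgn_pow (a : ZMod 2) : sgn a ^ 4 = 1 := by
  rcases zmod_two_cases a with rfl | rfl <;> norm_num [sgn_zero, sgn_one]

lemma prod_letterPhase_pow {n : ℕ} (P : Fin n → Fin 4) : (∏ j, letterPhase (P j)) ^ 4 = 1 := by
  rw [← Finset.prod_pow]
  exact Finset.prod_eq_one fun j _ => letterPhase_pow _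

/-! ### The Shor stabilizer -/

/-- The `X` exponents of the product of the Shor generators selected by `b`. -/
def stabX (b : Fin 8 → ZMod 2) : Fin 9 → ZMod 2 :=
  ![b 6, b 6, b 6, b 6 + b 7, b 6 + b 7, b 6 + b 7, b 7, b 7, b 7]

/-- The `Z` exponents of the product of the Shor generators selected by `b`. -/
def stabZ (b : Fin 8 → ZMod 2) : Fin 9 → ZMod 2 :=
  ![b 0, b 0 + b 1, b 1, b 2, b 2 + b 3, b 3, b 4, b 4 + b 5, b 5]

lemma stabX_add (b b' : Fin 8 → ZMod 2) : stabX (b + b') = stabX b + stabX b' := by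
  funext j
  fin_cases j <;> simp [stabX] <;> ring

lemma stabZ_add (b b' : Fin 8 → ZMod 2) : stabZ (b + b') = stabZ b + stabZ b' := by
  funext j
  fin_cases j <;> simp [stabZ] <;> ring

lemma stabX_zero : stabX 0 = 0 := by decide

lemma stabZ_zero : stabZ 0 = 0 := by decide

lemma stabZ_dot_stabX (b b' : Fin 8 → ZMod 2) : stabZ b ⬝ᵥ stabX b' = 0 := by
  have h2 : (2 : ZMod 2) = 0 := rfl
  simp only [stabX, stabZ, dotProduct, Fin.sum_univ_succ, Fin.sum_univ_zero]
  simp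
  linear_combination ((b 0 + b 1) * b' 6 + (b 2 + b 3) * (b' 6 + b' 7) + (b 4 + b 5) * b' 7) * h2

/-- The product of the Shor generators selected by `b`. It is multiplicative in `b` because the
`Z` exponents are orthogonal to the `X` exponents. -/
def stabHom : Multiplicative (Fin 8 → ZMod 2) →* Matrix (Fin (2 ^ 9)) (Fin (2 ^ 9)) ℂ where
  toFun b := weyl 9 (stabX b.toAdd) (stabZ b.toAdd)
  map_one' := by simp [stabX_zero, stabZ_zero, weyl_zero]
  map_mul' b b' := by
    rw [weyl_mul, stabZ_dot_stabX, sgn_zero, one_smul, toAdd_mul, stabX_add, stabZ_add]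

lemma shorGens_eq_weyl (i : Fin 8) :
    shorGens i = weyl 9 (stabX (Pi.single i 1)) (stabZ (Pi.single i 1)) := by
  fin_cases i <;>
  · simp only [shorGens]
    refine (pauliWord_eq 9 _).trans ?_
    rw [show (∏ j, letterPhase _ : ℂ) = 1 by
      simp [Fin.prod_univ_succ, letterPhase], one_smul]
    congr 1 <;> decide

lemma shorGens_eq (i : Fin 8) : shorGens i = stabHom (Multiplicative.ofAdd (Pi.single i 1)) :=
  shorGens_eq_weyl i

lemma closure_eq_mrange : Submonoid.closure (Set.range shorGens) = MonoidHom.mrange stabHom := by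
  apply le_antisymm
  · rw [Submonoid.closure_le]
    rintro _ ⟨i, rfl⟩
    exact ⟨_, (shorGens_eq i).symm⟩
  · rintro _ ⟨b, rfl⟩
    -- Membership is additive in `b`, so it is enough to treat the summands `Pi.single i (b i)`.
    have key : ∀ v : Fin 8 → ZMod 2,
        stabHom (Multiplicative.ofAdd v) ∈ Submonoid.closure (Set.range shorGens) := by
      intro v
      rw [← Finset.univ_sum_single v]
      refine Finset.sum_induction _ (fun w => stabHom (Multiplicative.ofAdd w) ∈
        Submonoid.closure (Set.range shorGens)) ?_ ?_ ?_
      · intro w w' hw hw'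
        rw [ofAdd_add, map_mul]
        exact mul_mem hw hw'
      · rw [ofAdd_zero, map_one]
        exact one_mem _
      · intro i _
        rcases zmod_two_cases (v i) with h | h <;> rw [h]
        · rw [Pi.single_zero, ofAdd_zero, map_one]
          exact one_mem _
        · rw [← shorGens_eq]
          exact Submonoid.subset_closure ⟨i, rfl⟩
    exact key b.toAdd

lemma eq_one_of_trace_stabHom {b : Multiplicative (Fin 8 → ZMod 2)}
    (h : (stabHom b).trace ≠ 0) : b = 1 := by
  obtain ⟨hx, hz⟩ := weyl_eq_zero_of_trace (x := stabX b.toAdd) (z := stabZ b.toAdd) h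
  apply Multiplicative.toAdd.injective
  funext i
  fin_cases i
  exacts [congrFun hz 0, congrFun hz 2, congrFun hz 3, congrFun hz 5, congrFun hz 6,
    congrFun hz 8, congrFun hx 0, congrFun hx 8]

lemma stabHom_injective : Function.Injective stabHom := by
  intro b b' h
  rw [← div_eq_one]
  apply eq_one_of_trace_stabHom
  have h1 : stabHom (b / b') = 1 := by
    rw [div_eq_mul_inv, map_mul, h, ← map_mul, mul_inv_cancel, map_one]
  rw [h1, Matrix.trace_one]
  simp

/-! ### Error correction -/

/-- The combinatorial syndrome of a Pauli word, given by the symplectic form. -/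
def sympSyndrome (P : Fin 9 → Fin 4) (i : Fin 8) : ZMod 2 :=
  (fun j => zBit (P j)) ⬝ᵥ stabX (Pi.single i 1) +
    stabZ (Pi.single i 1) ⬝ᵥ (fun j => xBit (P j))

lemma syndrome_eq (P : Fin 9 → Fin 4) (i : Fin 8) :
    syndrome shorGens (pauliWord 9 P) i = sympSyndrome P i := by
  have hc : (∏ j, letterPhase (P j)) ≠ 0 := by
    intro h
    simpa [h] using prod_letterPhase_pow P
  have hiff : pauliWord 9 P * shorGens i = shorGens i * pauliWord 9 P ↔
      (fun j => zBit (P j)) ⬝ᵥ stabX (Pi.single i 1) =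
        stabZ (Pi.single i 1) ⬝ᵥ (fun j => xBit (P j)) := by
    rw [← weyl_comm_iff, pauliWord_eq, shorGens_eq_weyl, Matrix.smul_mul, Matrix.mul_smul]
    exact (smul_right_injective _ hc).eq_iff
  simp only [syndrome, sympSyndrome, hiff]
  generalize (fun j => zBit (P j)) ⬝ᵥ stabX (Pi.single i 1) = s
  generalize stabZ (Pi.single i 1) ⬝ᵥ (fun j => xBit (P j)) = t
  rcases zmod_two_cases s with rfl | rfl <;> rcases zmod_two_cases t with rfl | rfl <;>
    simp [CharTwo.add_self_eq_zero]

/-- The `X` correction: within each block of three qubits, the two `Z`-type syndrome bits `10`,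
`11`, `01` point to the first, second and third qubit. -/
def decodeX (s : Fin 8 → ZMod 2) : Fin 9 → ZMod 2 :=
  ![s 0 * (1 + s 1), s 0 * s 1, (1 + s 0) * s 1, s 2 * (1 + s 3), s 2 * s 3, (1 + s 2) * s 3,
    s 4 * (1 + s 5), s 4 * s 5, (1 + s 4) * s 5]

/-- The `Z` correction: the two `X`-type syndrome bits `10`, `11`, `01` point to the first, second
and third block, on whose first qubit `Z` is applied. -/
def decodeZ (s : Fin 8 → ZMod 2) : Fin 9 → ZMod 2 :=
  ![s 6 * (1 + s 7), 0, 0, s 6 * s 7, 0, 0, (1 + s 6) * s 7, 0, 0]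

/-- After correction, a single-qubit error has no `X` part and its `Z` part is one of the
`Z`-type stabilizers; the selecting bits are the exponents on the outer qubits of each block. -/
lemma decode_single (j : Fin 9) (a : Fin 4) :
    let P : Fin 9 → Fin 4 := Pi.single j a
    let x := decodeX (sympSyndrome P) + fun k => xBit (P k)
    let z := decodeZ (sympSyndrome P) + fun k => zBit (P k)
    let b : Fin 8 → ZMod 2 := ![z 0, z 2, z 3, z 5, z 6, z 8, 0, 0]
    x = stabX b ∧ z = stabZ b := by
  revert j a
  decide +kernel

/-- the Shor code generators pairwise commute, generate a subgroup of
order 256 not containing -I, and there is an error-correcting function φ correcting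
every single-qubit error. -/
theorem shor_stabilizer_facts :
    (∀ i j, shorGens i * shorGens j = shorGens j * shorGens i) ∧
    (Submonoid.closure (Set.range shorGens) : Set (Matrix (Fin (2 ^ 9)) (Fin (2 ^ 9)) ℂ)).ncard = 256 ∧
    (-1 : Matrix (Fin (2 ^ 9)) (Fin (2 ^ 9)) ℂ) ∉ Submonoid.closure (Set.range shorGens) ∧
    ∃ φ : (Fin 8 → ZMod 2) → Matrix (Fin (2 ^ 9)) (Fin (2 ^ 9)) ℂ,
      ∀ P : Fin 9 → Fin 4, (∃ j, ∀ i, i ≠ j → P i = 0) →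
        ∃ c ∈ PauliPhase,
          c • (φ (syndrome shorGens (pauliWord 9 P)) * pauliWord 9 P) ∈
            Submonoid.closure (Set.range shorGens) := by
  rw [closure_eq_mrange]
  refine ⟨fun i j => ?_, ?_, ?_, fun s => weyl 9 (decodeX s) (decodeZ s), ?_⟩
  · rw [shorGens_eq, shorGens_eq, ← map_mul, mul_comm, map_mul]
  · rw [MonoidHom.coe_mrange, ← Set.image_univ, Set.ncard_image_of_injective _ stabHom_injective,
      Set.ncard_univ, Nat.card_eq_fintype_card, Fintype.card_multiplicative, Fintype.card_fun,
      ZMod.card, Fintype.card_fin]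
    norm_num
  · rintro ⟨b, hb⟩
    have hb1 : b = 1 := eq_one_of_trace_stabHom (by rw [hb]; simp)
    rw [hb1, map_one] at hb
    have h := congrFun (congrFun hb 0) 0
    norm_num at h
  · rintro P ⟨j, hP⟩
    have hPs : P = Pi.single j (P j) := by
      funext i
      by_cases h : i = j
      · subst h; simp
      · rw [hP i h, Pi.single_eq_of_ne h]
    have hsyn : syndrome shorGens (pauliWord 9 P) = sympSyndrome P := funext (syndrome_eq P)
    have hdec := decode_single j (P j)
    rw [← hPs] at hdec
    obtain ⟨hx, hz⟩ := hdec
    rw [hsyn, pauliWord_eq, Matrix.mul_smul, weyl_mul, smul_smul, hx, hz]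
    set d : ℂ := (∏ j, letterPhase (P j)) * sgn (decodeZ (sympSyndrome P) ⬝ᵥ fun k => xBit (P k))
      with hd
    have hd4 : d ^ 4 = 1 := by rw [hd, mul_pow, prod_letterPhase_pow, sgn_pow, one_mul]
    have hd0 : d ≠ 0 := by
      intro h
      simp [h] at hd4
    refine ⟨d⁻¹, (mem_pauliPhase_iff _).2 (by rw [inv_pow, hd4, inv_one]), ?_⟩
    rw [smul_smul, inv_mul_cancel₀ hd0, one_smul]
    exact ⟨Multiplicative.ofAdd _, rfl⟩

end
end
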